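/- Let α ∈ (0, 1] and 1 ≤ p < ∞. The problem of L_p-approximation on the Hölder classes F_d^α is polynomially tractable. More precisely, for p ≥ 2 there is a constant c > 0, depending only on α and p, such that for all d ≥ 2 and ε ∈ (0, 1/2), n(ε, F_d^α, L_p) ≤ c · d² · log²(d) · ε^{-p} · log⁴(ε^{-1}). -/

import Mathlib

open MeasureTheory Real Finset

noncomputable section

/-- The unit cube `[0,1]^d`. -/
def cube (d : ℕ) : Set (Fin d → ℝ) := Set.univ.pi fun _ => Set.Icc 0 1

/-- The trigonometric character `e^{2πi⟨k,x⟩}`. -/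
def eK (d : ℕ) (k : Fin d → ℤ) (x : Fin d → ℝ) : ℂ :=
  Complex.exp (2 * Real.pi * Complex.I * ∑ i, (k i : ℂ) * (x i : ℂ))

/-- The Fourier coefficient `f̂(k) = ∫_{[0,1]^d} f(x) e^{-2πi⟨k,x⟩} dx`. -/
def fCoeff (d : ℕ) (f : (Fin d → ℝ) → ℂ) (k : Fin d → ℤ) : ℂ :=
  ∫ x in cube d, f x * Complex.exp (-(2 * Real.pi * Complex.I) * ∑ i, (k i : ℂ) * (x i : ℂ))

/-- `f` is 1-periodic in each coordinate. -/
def Periodic1 (d : ℕ) (f : (Fin d → ℝ) → ℂ) : Prop :=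
  ∀ (x : Fin d → ℝ) (i : Fin d), f (Function.update x i (x i + 1)) = f x

/-- The weight `max(1, log ‖k‖_∞)`. -/
def logWeight (d : ℕ) (k : Fin d → ℤ) : ℝ :=
  max 1 (Real.log ((Finset.univ.sup fun i => (k i).natAbs : ℕ) : ℝ))

/-- The class `F_d^log` of continuous 1-periodic functions with
`∑_k |f̂(k)| max(1, log ‖k‖_∞) ≤ 1`. -/
def FdLog (d : ℕ) : Set ((Fin d → ℝ) → ℂ) :=
  {f | Continuous f ∧ Periodic1 d f ∧
    Summable (fun k : Fin d → ℤ => ‖fCoeff d f k‖ * logWeight d k) ∧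
    ∑' k : Fin d → ℤ, ‖fCoeff d f k‖ * logWeight d k ≤ 1}

/-- The Hölder class `F_d^α`: continuous 1-periodic functions with absolutely summable
Fourier coefficients, `∑_k |f̂(k)| ≤ 1`, that are `α`-Hölder with constant 1 with respect
to the Euclidean norm on `ℝ^d`. -/
def FdAlpha (α : ℝ) (d : ℕ) : Set ((Fin d → ℝ) → ℂ) :=
  {f | Continuous f ∧ Periodic1 d f ∧
    Summable (fun k : Fin d → ℤ => ‖fCoeff d f k‖) ∧
    (∑' k : Fin d → ℤ, ‖fCoeff d f k‖) ≤ 1 ∧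
    ∀ x y : Fin d → ℝ, ‖f x - f y‖ ≤ Real.sqrt (∑ i, (x i - y i) ^ 2) ^ α}

/-!
Two functions of the class with the same samples have a difference `h` vanishing at the sample
points, and `h / 4` lies in the closed convex hull of the characters times powers of `i`. On the
grid of mesh `1 / M` frequencies only matter modulo `M`, so this dictionary has `4 M ^ d` elements.

By Maurey's empirical method (Hoeffding's inequality and a union bound over the grid), each element
of the hull is uniformly `t / 4`-close on the grid to an average of `m ≈ t⁻² log (4 M ^ d)`
dictionary elements. There are at most `(4 M ^ d) ^ m` such averages, so some set of about
`q⁻¹ m log (4 M ^ d)` grid points meets `{|v| > t / 2}` for every average `v` for which that set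
has more than `q M ^ d` points. Hence an element `u` of the hull vanishing at these points satisfies
`#{|u| > t} ≤ q M ^ d`. Using this at the levels `t = 2 ^ (-j-1)` with `q ~ 4 ^ j ρ / L` for
`j < L` bounds the mean square of `u` over the grid by `ρ + 4 ^ (-L)`.

Hölder continuity turns the grid average into an `L_2` bound for `h`, and `|h| ≤ 2` turns that into
an `L_p` bound. With `θ = 2 / ε`, the choices `ρ ~ θ ^ (-p)`, `L ~ log θ` and
`M ~ d θ ^ ((p + 1) / (2 α))` make the number of samples of order `L² (log M ^ d)² / ρ`.
-/

section Sparsification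

open ProbabilityTheory

variable {Ω : Type*} [MeasurableSpace Ω] {μ : Measure Ω} [IsProbabilityMeasure μ]

lemma measureReal_pi_le_sum_sub_integral {g : Ω → ℝ} (hg : AEMeasurable g μ)
    (hb : ∀ ω, |g ω| ≤ 1) (m : ℕ) {τ : ℝ} (hτ : 0 ≤ τ) :
    (Measure.pi fun _ : Fin m => μ).real
        {s | m * τ ≤ ∑ i, g (s i) - m * ∫ ω, g ω ∂μ} ≤ Real.exp (-(m * τ ^ 2 / 2)) := by
  have hsub : HasSubgaussianMGF (fun ω => g ω - ∫ ω, g ω ∂μ) 1 μ := by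
    convert hasSubgaussianMGF_of_mem_Icc hg
      (ae_of_all _ fun ω => Set.mem_Icc.mpr (abs_le.mp (hb ω))) using 1
    ext
    norm_num
  have hindep : iIndepFun (fun (i : Fin m) (s : Fin m → Ω) => g (s i) - ∫ ω, g ω ∂μ)
      (Measure.pi fun _ : Fin m => μ) :=
    iIndepFun_pi fun _ => hg.sub_const _
  have hsub_eval (i : Fin m) :
      HasSubgaussianMGF (fun s : Fin m → Ω => g (s i) - ∫ ω, g ω ∂μ) 1
        (Measure.pi fun _ : Fin m => μ) := by
    have hmap := (measurePreserving_eval (fun _ : Fin m => μ) i).map_eq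
    exact HasSubgaussianMGF.of_map (measurable_pi_apply i).aemeasurable (by rwa [hmap])
  have hHoeffding := HasSubgaussianMGF.measure_sum_ge_le_of_iIndepFun hindep
    (s := Finset.univ) (fun i _ => hsub_eval i) (ε := m * τ) (by positivity)
  simp only [Finset.sum_sub_distrib, Finset.sum_const, Finset.card_univ, Fintype.card_fin,
    nsmul_eq_mul, NNReal.coe_natCast, mul_one] at hHoeffding
  refine hHoeffding.trans_eq (congrArg Real.exp ?_)
  rcases m.eq_zero_or_pos with rfl | hm
  · simp
  · field_simp

lemma measureReal_pi_le_abs_sum_sub_integral {g : Ω → ℝ} (hg : AEMeasurable g μ)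
    (hb : ∀ ω, |g ω| ≤ 1) (m : ℕ) {τ : ℝ} (hτ : 0 ≤ τ) :
    (Measure.pi fun _ : Fin m => μ).real
        {s | m * τ ≤ |∑ i, g (s i) - m * ∫ ω, g ω ∂μ|} ≤ 2 * Real.exp (-(m * τ ^ 2 / 2)) := by
  have hupper := measureReal_pi_le_sum_sub_integral hg hb m hτ
  have hlower := measureReal_pi_le_sum_sub_integral hg.neg (by simpa using hb) m hτ
  have hset : {s : Fin m → Ω | m * τ ≤ |∑ i, g (s i) - m * ∫ ω, g ω ∂μ|} =
      {s | m * τ ≤ ∑ i, g (s i) - m * ∫ ω, g ω ∂μ} ∪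
        {s | m * τ ≤ ∑ i, (-g) (s i) - m * ∫ ω, (-g) ω ∂μ} := by
    ext s
    simp only [Set.mem_ofPred, Set.mem_union, le_abs, Pi.neg_apply, Finset.sum_neg_distrib,
      integral_neg, neg_sub, mul_neg, sub_neg_eq_add, neg_add_eq_sub]
  rw [hset, two_mul]
  exact (measureReal_union_le _ _).trans (add_le_add hupper hlower)

lemma measureReal_pi_le_norm_sum_sub_integral {g : Ω → ℂ} (hg : AEMeasurable g μ)
    (hb : ∀ ω, ‖g ω‖ ≤ 1) (m : ℕ) {τ : ℝ} (hτ : 0 ≤ τ) :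
    (Measure.pi fun _ : Fin m => μ).real
        {s | m * τ ≤ ‖∑ i, g (s i) - m * ∫ ω, g ω ∂μ‖} ≤ 4 * Real.exp (-(m * τ ^ 2 / 8)) := by
  have hre := measureReal_pi_le_abs_sum_sub_integral (Complex.measurable_re.comp_aemeasurable hg)
    (fun ω => (Complex.abs_re_le_norm _).trans (hb ω)) m (div_nonneg hτ zero_le_two)
  have him := measureReal_pi_le_abs_sum_sub_integral (Complex.measurable_im.comp_aemeasurable hg)
    (fun ω => (Complex.abs_im_le_norm _).trans (hb ω)) m (div_nonneg hτ zero_le_two)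
  simp only [Function.comp_apply] at hre him
  have hint : Integrable g μ := Integrable.of_bound hg.aestronglyMeasurable 1 (ae_of_all _ hb)
  have hre_int : (∫ ω, g ω ∂μ).re = ∫ ω, (g ω).re ∂μ := (integral_re hint).symm
  have him_int : (∫ ω, g ω ∂μ).im = ∫ ω, (g ω).im ∂μ := (integral_im hint).symm
  have hsubset : {s : Fin m → Ω | m * τ ≤ ‖∑ i, g (s i) - m * ∫ ω, g ω ∂μ‖} ⊆
      {s | m * (τ / 2) ≤ |∑ i, (g (s i)).re - m * ∫ ω, (g ω).re ∂μ|} ∪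
        {s | m * (τ / 2) ≤ |∑ i, (g (s i)).im - m * ∫ ω, (g ω).im ∂μ|} := by
    intro s hs
    have hnorm := (Set.mem_ofPred.mp hs).trans (Complex.norm_le_abs_re_add_abs_im _)
    simp only [Complex.sub_re, Complex.sub_im, Complex.re_sum, Complex.im_sum,
      ← Complex.ofReal_natCast, Complex.re_ofReal_mul, Complex.im_ofReal_mul, hre_int,
      him_int] at hnorm
    simp only [Set.mem_union, Set.mem_ofPred]
    by_contra! hlt
    linarith [hlt.1, hlt.2]
  refine (measureReal_mono hsubset).trans ((measureReal_union_le _ _).trans ?_)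
  have hexp : m * (τ / 2) ^ 2 / 2 = m * τ ^ 2 / 8 := by ring
  rw [hexp] at hre him
  linarith

variable {X : Type*} [Fintype X]

lemma exists_forall_norm_sum_sub_integral_lt {ψ : Ω → X → ℂ}
    (hψm : ∀ x, AEMeasurable (fun ω => ψ ω x) μ) (hψ : ∀ ω x, ‖ψ ω x‖ ≤ 1) {m : ℕ} {τ : ℝ}
    (hτ : 0 ≤ τ) (hm : 4 * Fintype.card X * Real.exp (-(m * τ ^ 2 / 8)) < 1) :
    ∃ s : Fin m → Ω, ∀ x, ‖∑ i, ψ (s i) x - m * ∫ ω, ψ ω x ∂μ‖ < m * τ := by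
  let P := Measure.pi fun _ : Fin m => μ
  let bad (x : X) : Set (Fin m → Ω) := {s | m * τ ≤ ‖∑ i, ψ (s i) x - m * ∫ ω, ψ ω x ∂μ‖}
  have hbad : P.real (⋃ x, bad x) < 1 :=
    calc P.real (⋃ x, bad x) ≤ ∑ x, P.real (bad x) := measureReal_iUnion_fintype_le _
      _ ≤ ∑ _x : X, 4 * Real.exp (-(m * τ ^ 2 / 8)) := Finset.sum_le_sum fun x _ =>
          measureReal_pi_le_norm_sum_sub_integral (hψm x) (fun ω => hψ ω x) m hτ
      _ = 4 * Fintype.card X * Real.exp (-(m * τ ^ 2 / 8)) := by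
          rw [Finset.sum_const, nsmul_eq_mul, Finset.card_univ]
          ring
      _ < 1 := hm
  obtain ⟨s, hs⟩ : ∃ s, s ∉ ⋃ x, bad x := by
    by_contra! hall
    rw [Set.eq_univ_of_forall hall, probReal_univ] at hbad
    exact lt_irrefl _ hbad
  exact ⟨s, fun x => not_le.mp fun hx => hs (Set.mem_iUnion.mpr ⟨x, hx⟩)⟩

lemma exists_probabilityMeasure_integral_eq_of_mem_convexHull_range {J Y : Type*}
    [MeasurableSpace J] [MeasurableSingletonClass J] {ψ : J → Y → ℂ} {u : Y → ℂ}
    (hu : u ∈ convexHull ℝ (Set.range ψ)) :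
    ∃ ν : Measure J, IsProbabilityMeasure ν ∧ ∀ y, ∫ j, ψ j y ∂ν = u y := by
  rw [convexHull_range_eq_exists_affineCombination] at hu
  obtain ⟨s, w, hw_nonneg, hw_sum, rfl⟩ := hu
  rw [Finset.affineCombination_eq_linear_combination _ _ _ hw_sum]
  refine ⟨∑ j ∈ s, ENNReal.ofReal (w j) • Measure.dirac j, ⟨?_⟩, fun y => ?_⟩
  · simp [Measure.finsetSum_apply, ← ENNReal.ofReal_sum_of_nonneg hw_nonneg, hw_sum]
  · rw [integral_finsetSum_measure fun j _ =>
      (integrable_dirac (by finiteness)).smul_measure ENNReal.ofReal_ne_top, Finset.sum_apply]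
    refine Finset.sum_congr rfl fun j hj => ?_
    rw [integral_smul_measure, integral_dirac, ENNReal.toReal_ofReal (hw_nonneg j hj),
      Pi.smul_apply]

lemma exists_forall_norm_sum_sub_lt_of_mem_convexHull {J : Type*} {ψ : J → X → ℂ}
    (hψ : ∀ j x, ‖ψ j x‖ ≤ 1) {u : X → ℂ} (hu : u ∈ convexHull ℝ (Set.range ψ)) {m : ℕ} {τ : ℝ}
    (hτ : 0 ≤ τ) (hm : 4 * Fintype.card X * Real.exp (-(m * τ ^ 2 / 8)) < 1) :
    ∃ s : Fin m → J, ∀ x, ‖∑ i, ψ (s i) x - m * u x‖ < m * τ := by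
  let _ : MeasurableSpace J := ⊤
  obtain ⟨ν, hν, hint⟩ := exists_probabilityMeasure_integral_eq_of_mem_convexHull_range hu
  simp only [← hint]
  exact exists_forall_norm_sum_sub_integral_lt (fun x => measurable_from_top.aemeasurable) hψ hτ hm

end Sparsification

section FiniteRecovery

variable {X J : Type*} {ψ : J → X → ℂ}

lemma norm_apply_le_of_mem_convexHull_range {C : ℝ} (hψ : ∀ j x, ‖ψ j x‖ ≤ C) {u : X → ℂ}
    (hu : u ∈ convexHull ℝ (Set.range ψ)) (x : X) : ‖u x‖ ≤ C := by
  have hconvex : Convex ℝ ((fun v : X → ℂ => v x) ⁻¹' Metric.closedBall 0 C) :=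
    (convex_closedBall 0 C).linear_preimage (LinearMap.proj x : (X → ℂ) →ₗ[ℝ] ℂ)
  have hrange : Set.range ψ ⊆ (fun v : X → ℂ => v x) ⁻¹' Metric.closedBall 0 C :=
    Set.range_subset_iff.mpr fun j => mem_closedBall_zero_iff.mpr (hψ j x)
  exact mem_closedBall_zero_iff.mp (convexHull_min hrange hconvex hu)

variable [Fintype X]

lemma card_compl_pow_le_of_lt_card [DecidableEq X] {B : Finset X} {q : ℝ}
    (hB : q * Fintype.card X < #B) (n : ℕ) :
    (#Bᶜ : ℝ) ^ n ≤ Real.exp (-(q * n)) * Fintype.card X ^ n := by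
  have hcard : (#Bᶜ : ℝ) ≤ Real.exp (-q) * Fintype.card X := by
    rw [Finset.card_compl, Nat.cast_sub (Finset.card_le_univ _)]
    nlinarith [Real.add_one_le_exp (-q), (Fintype.card X).cast_nonneg (α := ℝ)]
  calc (#Bᶜ : ℝ) ^ n ≤ (Real.exp (-q) * Fintype.card X) ^ n := by gcongr
    _ = Real.exp (-(q * n)) * Fintype.card X ^ n := by
        rw [mul_pow, ← Real.exp_nat_mul, mul_neg, mul_comm (n : ℝ) q]

lemma exists_forall_exists_apply_mem_of_lt_card [Nonempty X] {S : Type*} [Fintype S]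
    {B : S → Finset X} {q : ℝ} (hB : ∀ s, q * Fintype.card X < #(B s)) {n : ℕ}
    (hn : Fintype.card S * Real.exp (-(q * n)) < 1) :
    ∃ x : Fin n → X, ∀ s, ∃ i, x i ∈ B s := by
  classical
  by_contra! hmiss
  have hcover : (Finset.univ : Finset (Fin n → X)) ⊆
      Finset.univ.biUnion fun s => Fintype.piFinset fun _ : Fin n => (B s)ᶜ := by
    intro x _
    obtain ⟨s, hs⟩ := hmiss x
    simpa using ⟨s, hs⟩
  have hcount : (Fintype.card X : ℝ) ^ n ≤ ∑ s, (#(B s)ᶜ : ℝ) ^ n := by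
    have := (Finset.card_le_card hcover).trans Finset.card_biUnion_le
    simp only [Fintype.card_piFinset_const, Finset.card_univ, Fintype.card_pi, Finset.prod_const,
      Fintype.card_fin] at this
    exact_mod_cast this
  have hlt :=
    calc ∑ s, (#(B s)ᶜ : ℝ) ^ n
        ≤ ∑ _s : S, Real.exp (-(q * n)) * (Fintype.card X : ℝ) ^ n :=
          Finset.sum_le_sum fun s _ => card_compl_pow_le_of_lt_card (hB s) n
      _ = Fintype.card S * Real.exp (-(q * n)) * (Fintype.card X : ℝ) ^ n := by
          rw [Finset.sum_const, nsmul_eq_mul, Finset.card_univ, mul_assoc]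
      _ < (Fintype.card X : ℝ) ^ n := mul_lt_of_lt_one_left (by positivity) hn
  exact hlt.not_ge hcount

lemma exists_pos_mul_exp_lt_one_and_pow_mul_exp_lt_one {N K : ℕ} (hN : 0 < N) {t a : ℝ}
    (ht : 0 < t) (ht1 : t ≤ 1) (h : 256 * Real.log (4 * N) * Real.log K < a * t ^ 2) :
    ∃ m : ℕ, 0 < m ∧ 4 * N * Real.exp (-(m * (t / 4) ^ 2 / 8)) < 1 ∧
      (K : ℝ) ^ m * Real.exp (-a) < 1 := by
  have hN_one : (1 : ℝ) ≤ N := by exact_mod_cast hN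
  have hlogN : 1 ≤ Real.log (4 * N) := by
    rw [Real.le_log_iff_exp_le (by positivity)]
    linarith [Real.exp_one_lt_d9]
  have ht_sq : t ^ 2 ≤ 1 := pow_le_one₀ ht.le ht1
  set b := 128 * Real.log (4 * N) / t ^ 2
  have hbt : b * t ^ 2 = 128 * Real.log (4 * N) := div_mul_cancel₀ _ (by positivity)
  have hm_gt : b < (⌊b⌋₊ + 1 : ℕ) := by exact_mod_cast Nat.lt_floor_add_one b
  have hm_le : ((⌊b⌋₊ + 1 : ℕ) : ℝ) ≤ 2 * b := by
    have hb_one : 1 ≤ b := by nlinarith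
    push_cast
    linarith [Nat.floor_le (zero_le_one.trans hb_one)]
  refine ⟨⌊b⌋₊ + 1, Nat.succ_pos _, ?_, ?_⟩ <;> generalize ⌊b⌋₊ + 1 = m at hm_gt hm_le ⊢
  · rw [← Real.exp_log (show (0 : ℝ) < 4 * N by positivity), ← Real.exp_add, Real.exp_lt_one_iff]
    nlinarith [mul_lt_mul_of_pos_right hm_gt (pow_pos ht 2)]
  · have hmK : m * Real.log K < a := by
      refine lt_of_mul_lt_mul_right (lt_of_le_of_lt ?_ h) (sq_nonneg t)
      calc m * Real.log K * t ^ 2 ≤ 2 * b * Real.log K * t ^ 2 := by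
            gcongr
        _ = 256 * Real.log (4 * N) * Real.log K := by linear_combination 2 * Real.log K * hbt
    calc (K : ℝ) ^ m * Real.exp (-a) ≤ Real.exp (Real.log K) ^ m * Real.exp (-a) := by
          gcongr
          exact Real.le_exp_log _
      _ = Real.exp (m * Real.log K - a) := by
          rw [← Real.exp_nat_mul, ← Real.exp_add, sub_eq_add_neg]
      _ < 1 := Real.exp_lt_one_iff.mpr (sub_neg.mpr hmK)

lemma exists_card_lt_norm_le_of_apply_eq_zero [Nonempty X] [Fintype J]
    (hψ : ∀ j x, ‖ψ j x‖ ≤ 1) {t q : ℝ} (ht : 0 < t) (ht1 : t ≤ 1) {n : ℕ}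
    (hn : 256 * Real.log (4 * Fintype.card X) * Real.log (Fintype.card J) < q * n * t ^ 2) :
    ∃ x : Fin n → X, ∀ u ∈ convexHull ℝ (Set.range ψ), (∀ i, u (x i) = 0) →
      (#{y | t < ‖u y‖} : ℝ) ≤ q * Fintype.card X := by
  obtain ⟨m, hm, hsparse, hcard⟩ :=
    exists_pos_mul_exp_lt_one_and_pow_mul_exp_lt_one Fintype.card_pos ht ht1 hn
  let large (s : Fin m → J) : Finset X := {y | m * (t / 2) < ‖∑ i, ψ (s i) y‖}
  have hfamily : Fintype.card {s // q * Fintype.card X < #(large s)} * Real.exp (-(q * n)) < 1 := by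
    refine lt_of_le_of_lt ?_ hcard
    gcongr
    have := Fintype.card_subtype_le fun s => q * Fintype.card X < #(large s)
    rw [Fintype.card_fun, Fintype.card_fin] at this
    exact_mod_cast this
  obtain ⟨x, hx⟩ := exists_forall_exists_apply_mem_of_lt_card
    (B := fun s : {s // q * Fintype.card X < #(large s)} => large s) (fun s => s.2) hfamily
  refine ⟨x, fun u hu hux => ?_⟩
  obtain ⟨s, hs⟩ := exists_forall_norm_sum_sub_lt_of_mem_convexHull hψ hu
    (div_nonneg ht.le zero_le_four) hsparse
  have hmt : 0 < m * t := by positivity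
  have hsubset : ({y | t < ‖u y‖} : Finset X) ⊆ large s := by
    intro y hy
    simp only [large, Finset.mem_filter, Finset.mem_univ, true_and] at hy ⊢
    have hnorm : m * t < ‖m * u y‖ := by
      rw [norm_mul, Complex.norm_natCast]
      gcongr
    linarith [hs y, norm_sub_norm_le (m * u y) (∑ i, ψ (s i) y),
      norm_sub_rev (m * u y) (∑ i, ψ (s i) y)]
  refine le_of_not_gt fun hlarge => ?_
  obtain ⟨i, hi⟩ := hx ⟨s, hlarge.trans_le (by exact_mod_cast Finset.card_le_card hsubset)⟩
  simp only [large, Finset.mem_filter, Finset.mem_univ, true_and] at hi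
  have hsi := hs (x i)
  rw [hux i, mul_zero, sub_zero] at hsi
  linarith

lemma sq_le_add_sum_dyadic {v : ℝ} (hv_nonneg : 0 ≤ v) (hv : v ≤ 1) (L : ℕ) :
    v ^ 2 ≤ (1 / 4) ^ L +
      ∑ j ∈ Finset.range L, (1 / 4) ^ j * if (1 / 2) ^ (j + 1) < v then 1 else 0 := by
  induction L with
  | zero => simpa only [pow_zero, Finset.range_zero, Finset.sum_empty, add_zero] using
      pow_le_one₀ hv_nonneg hv
  | succ L ih =>
    have hpow : ((1 / 2 : ℝ) ^ (L + 1)) ^ 2 = (1 / 4) ^ (L + 1) := by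
      rw [← pow_mul, mul_comm, pow_mul]
      norm_num
    rw [Finset.sum_range_succ]
    split_ifs with hlt
    · have : (0 : ℝ) ≤ (1 / 4) ^ (L + 1) := by positivity
      linarith
    · have hsum : 0 ≤ ∑ j ∈ Finset.range L,
          (1 / 4 : ℝ) ^ j * if (1 / 2) ^ (j + 1) < v then 1 else 0 :=
        Finset.sum_nonneg fun j _ => by positivity
      linarith [pow_le_pow_left₀ hv_nonneg (not_lt.mp hlt) 2]

lemma sum_norm_sq_le_of_card_lt_norm_le {u : X → ℂ} (hu : ∀ y, ‖u y‖ ≤ 1) {ρ : ℝ} (hρ : 0 ≤ ρ)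
    {L : ℕ} (hlevel : ∀ j < L, (#{y | (1 / 2) ^ (j + 1) < ‖u y‖} : ℝ) ≤
      ρ * 4 ^ j / L * Fintype.card X) :
    ∑ y, ‖u y‖ ^ 2 ≤ (ρ + (1 / 4) ^ L) * Fintype.card X := by
  have hlayer : ∀ j ∈ Finset.range L,
      (1 / 4 : ℝ) ^ j * #{y | (1 / 2) ^ (j + 1) < ‖u y‖} ≤ ρ * Fintype.card X / L := by
    intro j hj
    have hinv : (1 / 4 : ℝ) ^ j * 4 ^ j = 1 := by rw [← mul_pow]; norm_num
    calc (1 / 4 : ℝ) ^ j * #{y | (1 / 2) ^ (j + 1) < ‖u y‖}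
        ≤ (1 / 4) ^ j * (ρ * 4 ^ j / L * Fintype.card X) := by
          gcongr
          exact hlevel j (Finset.mem_range.mp hj)
      _ = ρ * Fintype.card X / L := by linear_combination ρ * Fintype.card X / L * hinv
  calc ∑ y, ‖u y‖ ^ 2
      ≤ ∑ y, ((1 / 4) ^ L +
          ∑ j ∈ Finset.range L, (1 / 4) ^ j * if (1 / 2) ^ (j + 1) < ‖u y‖ then 1 else 0) :=
        Finset.sum_le_sum fun y _ => sq_le_add_sum_dyadic (norm_nonneg _) (hu y) L
    _ = (1 / 4) ^ L * Fintype.card X +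
          ∑ j ∈ Finset.range L, (1 / 4) ^ j * (#{y | (1 / 2) ^ (j + 1) < ‖u y‖} : ℝ) := by
        rw [Finset.sum_add_distrib, Finset.sum_comm, Finset.sum_const, Finset.card_univ,
          nsmul_eq_mul, mul_comm]
        simp only [← Finset.mul_sum, Finset.sum_boole]
    _ ≤ (1 / 4) ^ L * Fintype.card X + ∑ _j ∈ Finset.range L, ρ * Fintype.card X / L := by
        gcongr with j hj
        exact hlayer j hj
    _ ≤ (ρ + (1 / 4) ^ L) * Fintype.card X := by
        rw [Finset.sum_const, Finset.card_range, nsmul_eq_mul, mul_div_left_comm, add_comm,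
          add_mul]
        exact add_le_add_left (mul_le_of_le_one_right (by positivity) (div_self_le_one _)) _

lemma exists_sum_norm_sq_le_of_apply_eq_zero [Nonempty X] [Fintype J]
    (hψ : ∀ j x, ‖ψ j x‖ ≤ 1) {ρ : ℝ} (hρ : 0 < ρ) {L n : ℕ}
    (hn : 1024 * L * Real.log (4 * Fintype.card X) * Real.log (Fintype.card J) < ρ * n) :
    ∃ x : Fin L × Fin n → X, ∀ u ∈ convexHull ℝ (Set.range ψ), (∀ i, u (x i) = 0) →
      ∑ y, ‖u y‖ ^ 2 ≤ (ρ + (1 / 4) ^ L) * Fintype.card X := by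
  have hlevel (j : Fin L) : ∃ x : Fin n → X, ∀ u ∈ convexHull ℝ (Set.range ψ),
      (∀ i, u (x i) = 0) →
        (#{y | (1 / 2) ^ (j + 1 : ℕ) < ‖u y‖} : ℝ) ≤ ρ * 4 ^ (j : ℕ) / L * Fintype.card X := by
    have hL : (0 : ℝ) < L := by exact_mod_cast j.pos
    have hpow : (4 : ℝ) ^ (j : ℕ) * ((1 / 2) ^ (j + 1 : ℕ)) ^ 2 = 1 / 4 := by
      rw [← pow_mul, mul_comm _ 2, pow_mul, pow_succ, ← mul_assoc, ← mul_pow]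
      norm_num
    refine exists_card_lt_norm_le_of_apply_eq_zero hψ (by positivity)
      (pow_le_one₀ (by norm_num) (by norm_num)) ?_
    calc 256 * Real.log (4 * Fintype.card X) * Real.log (Fintype.card J)
        = 1024 * L * Real.log (4 * Fintype.card X) * Real.log (Fintype.card J) / (4 * L) := by
          field_simp
          ring
      _ < ρ * n / (4 * L) := by gcongr
      _ = ρ * 4 ^ (j : ℕ) / L * n * ((1 / 2) ^ (j + 1 : ℕ)) ^ 2 := by
          linear_combination -(ρ * n / L) * hpow
  choose x hx using hlevel
  exact ⟨fun i => x i.1 i.2, fun u hu hux => sum_norm_sq_le_of_card_lt_norm_le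
    (norm_apply_le_of_mem_convexHull_range hψ hu) hρ.le
    fun j hj => hx ⟨j, hj⟩ u hu fun i => hux (⟨j, hj⟩, i)⟩

end FiniteRecovery

section Dictionary

lemma sum_smul_mem_of_convex_of_zero_mem {ι E : Type*} [AddCommGroup E] [Module ℝ E] {H : Set E}
    (hH : Convex ℝ H) (h0 : 0 ∈ H) {s : Finset ι} {w : ι → ℝ} {v : ι → E}
    (hw : ∀ i ∈ s, 0 ≤ w i) (hsum : ∑ i ∈ s, w i ≤ 1) (hv : ∀ i ∈ s, v i ∈ H) :
    ∑ i ∈ s, w i • v i ∈ H := by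
  have hmem := hH.sum_mem (t := s.insertNone) (w := fun i => i.elim (1 - ∑ i ∈ s, w i) w)
    (z := fun i => i.elim 0 v)
  simp only [Finset.forall_mem_insertNone, Finset.sum_insertNone, Option.elim_none,
    Option.elim_some, smul_zero, zero_add, sub_add_cancel] at hmem
  exact hmem ⟨sub_nonneg.mpr hsum, hw⟩ trivial ⟨h0, hv⟩

lemma smul_mem_convexHull_range_I_pow_smul {V : Type*} [AddCommGroup V] [Module ℂ V] {z : ℂ}
    (hz : |z.re| + |z.im| ≤ 1) (v : V) :
    z • v ∈ convexHull ℝ (Set.range fun s : Fin 4 => Complex.I ^ (s : ℕ) • v) := by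
  set e := (1 - (|z.re| + |z.im|)) / 4 with he
  have he_nonneg : 0 ≤ e := div_nonneg (sub_nonneg.mpr hz) zero_le_four
  let w : Fin 4 → ℝ := ![z.re⁺ + e, z.im⁺ + e, z.re⁻ + e, z.im⁻ + e]
  have hw_nonneg : ∀ s, 0 ≤ w s := by
    intro s
    fin_cases s
    exacts [add_nonneg (posPart_nonneg _) he_nonneg, add_nonneg (posPart_nonneg _) he_nonneg,
      add_nonneg (negPart_nonneg _) he_nonneg, add_nonneg (negPart_nonneg _) he_nonneg]
  have hw_sum : ∑ s, w s = 1 := by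
    simp only [w, Fin.sum_univ_four, Matrix.cons_val]
    rw [← posPart_add_negPart z.re, ← posPart_add_negPart z.im] at he
    linear_combination 4 * he
  have hz_eq : ∑ s, (w s : ℂ) * Complex.I ^ (s : ℕ) = z := by
    have hexpand : ∑ s, (w s : ℂ) * Complex.I ^ (s : ℕ) =
        (z.re⁺ - z.re⁻ : ℝ) + (z.im⁺ - z.im⁻ : ℝ) * Complex.I := by
      rw [Fin.sum_univ_four]
      change ((z.re⁺ + e : ℝ) : ℂ) * Complex.I ^ 0 + (z.im⁺ + e : ℝ) * Complex.I ^ 1 +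
        (z.re⁻ + e : ℝ) * Complex.I ^ 2 + (z.im⁻ + e : ℝ) * Complex.I ^ 3 = _
      rw [Complex.I_sq, Complex.I_pow_three]
      push_cast
      ring
    rw [hexpand, posPart_sub_negPart, posPart_sub_negPart, Complex.re_add_im]
  have hmem := (convex_convexHull ℝ (Set.range fun s : Fin 4 => Complex.I ^ (s : ℕ) • v)).sum_mem
    (fun s _ => hw_nonneg s) hw_sum fun s _ => subset_convexHull ℝ _ (Set.mem_range_self s)
  simpa only [← Complex.coe_smul, smul_smul, ← Finset.sum_smul, hz_eq] using hmem

lemma mem_convexHull_of_hasSum {ι K V : Type*} [Finite K] [Nonempty K] [NormedAddCommGroup V]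
    [NormedSpace ℂ V] {ψ : K → V} {σ : ι → K} {c : ι → ℂ} {v : V} (hc : Summable fun i => ‖c i‖)
    (hc_le : ∑' i, ‖c i‖ ≤ 1 / 2) (hv : HasSum (fun i => c i • ψ (σ i)) v) :
    v ∈ convexHull ℝ (Set.range fun j : K × Fin 4 => Complex.I ^ (j.2 : ℕ) • ψ j.1) := by
  set H := convexHull ℝ (Set.range fun j : K × Fin 4 => Complex.I ^ (j.2 : ℕ) • ψ j.1)
  have hsmul (z : ℂ) (hz : ‖z‖ ≤ 1 / 2) (k : K) : z • ψ k ∈ H := by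
    have hz_re_im : |z.re| + |z.im| ≤ 1 := by
      linarith [Complex.abs_re_le_norm z, Complex.abs_im_le_norm z]
    refine convexHull_mono ?_ (smul_mem_convexHull_range_I_pow_smul hz_re_im (ψ k))
    exact Set.range_subset_iff.mpr fun s => Set.mem_range_self (k, s)
  have hpartial (s : Finset ι) : ∑ i ∈ s, c i • ψ (σ i) ∈ H := by
    have hnormalize (i : ι) :
        c i • ψ (σ i) = (2 * ‖c i‖) • ((c i / (2 * ‖c i‖ : ℝ)) • ψ (σ i)) := by
      rw [← Complex.coe_smul, smul_smul, mul_div_cancel_of_imp']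
      simp
    simp only [hnormalize]
    refine sum_smul_mem_of_convex_of_zero_mem (convex_convexHull ℝ _) ?_ (fun i _ => by positivity)
      ?_ fun i _ => hsmul _ ?_ _
    · simpa using hsmul 0 (by simp) (Classical.arbitrary K)
    · rw [← Finset.mul_sum]
      linarith [hc.sum_le_tsum s fun i _ => norm_nonneg (c i)]
    · rw [norm_div, Complex.norm_real, norm_mul, norm_norm, Real.norm_two]
      exact div_le_of_le_mul₀ (by positivity) (by norm_num) (by linarith)
  have hclosed : IsClosed H := ((Set.finite_range _).isCompact_convexHull ℝ).isClosed
  exact hclosed.mem_of_tendsto hv (Filter.Eventually.of_forall hpartial)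

end Dictionary

section FourierInversion

variable {d : ℕ} {f : (Fin d → ℝ) → ℂ}

lemma Periodic1.apply_update_add_intCast (hf : Periodic1 d f) (x : Fin d → ℝ) (i : Fin d) (n : ℤ) :
    f (Function.update x i (x i + n)) = f x := by
  have hper : Function.Periodic (fun s : ℝ => f (Function.update x i s)) 1 := fun s => by
    simpa using hf (Function.update x i s) i
  simpa using hper.int_mul n (x i)

lemma Periodic1.apply_eq_of_forall_eq_add_intCast (hf : Periodic1 d f) {x y : Fin d → ℝ}
    (h : ∀ i, ∃ n : ℤ, y i = x i + n) : f y = f x := by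
  have hpartial (s : Finset (Fin d)) : f (s.piecewise y x) = f x := by
    induction s using Finset.induction_on with
    | empty => rw [Finset.piecewise_empty]
    | insert a s ha ih =>
      obtain ⟨n, hn⟩ := h a
      rw [← ih, ← hf.apply_update_add_intCast (s.piecewise y x) a n, Finset.piecewise_insert,
        Finset.piecewise_eq_of_notMem _ _ _ ha, hn]
  simpa only [Finset.piecewise_univ] using hpartial Finset.univ

lemma Periodic1.exists_torusLift (hf : Periodic1 d f) (hc : Continuous f) :
    ∃ F : C(UnitAddTorus (Fin d), ℂ),
      ∀ x : Fin d → ℝ, F (fun i => (x i : UnitAddCircle)) = f x := by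
  have hquot : IsOpenQuotientMap (Pi.map fun _ : Fin d => ((↑) : ℝ → UnitAddCircle)) :=
    IsOpenQuotientMap.piMap fun _ => QuotientAddGroup.isOpenQuotientMap_mk
  have hfactors :
      Function.FactorsThrough f (Pi.map fun _ : Fin d => ((↑) : ℝ → UnitAddCircle)) := by
    intro x y hxy
    refine hf.apply_eq_of_forall_eq_add_intCast fun i => ?_
    obtain ⟨n, hn⟩ := AddSubgroup.mem_zmultiples_iff.mp
      (QuotientAddGroup.eq_iff_sub_mem.mp (congrFun hxy i))
    exact ⟨n, by linarith [zsmul_one (R := ℝ) n]⟩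
  let q : C(Fin d → ℝ, UnitAddTorus (Fin d)) := ⟨_, hquot.continuous⟩
  have hq : Topology.IsQuotientMap q := hquot.isQuotientMap
  exact ⟨hq.lift ⟨f, hc⟩ hfactors, DFunLike.congr_fun (hq.lift_comp ⟨f, hc⟩ hfactors)⟩

lemma mFourier_coe_eq_eK (k : Fin d → ℤ) (x : Fin d → ℝ) :
    UnitAddTorus.mFourier k (fun i => (x i : UnitAddCircle)) = eK d k x := by
  simp only [UnitAddTorus.mFourier, eK, ContinuousMap.coe_mk, fourier_coe_apply]
  rw [← Complex.exp_sum, Finset.mul_sum]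
  congr! 2 with i
  push_cast
  ring

lemma cube_eq_Icc (d : ℕ) : cube d = Set.Icc 0 1 := Set.pi_univ_Icc 0 1

lemma cube_ae_eq_pi_Ioc (d : ℕ) :
    cube d =ᵐ[volume] {x : Fin d → ℝ | ∀ i, x i ∈ Set.Ioc (0 : ℝ) (0 + 1)} := by
  have hpi : {x : Fin d → ℝ | ∀ i, x i ∈ Set.Ioc (0 : ℝ) (0 + 1)} =
      Set.univ.pi fun i => Set.Ioc ((0 : Fin d → ℝ) i) ((1 : Fin d → ℝ) i) := by
    ext x
    simp [Set.mem_pi]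
  rw [cube_eq_Icc, hpi]
  exact Measure.univ_pi_Ioc_ae_eq_Icc.symm

lemma mFourierCoeff_eq_fCoeff {F : C(UnitAddTorus (Fin d), ℂ)}
    (hF : ∀ x : Fin d → ℝ, F (fun i => (x i : UnitAddCircle)) = f x) (k : Fin d → ℤ) :
    UnitAddTorus.mFourierCoeff F k = fCoeff d f k := by
  rw [UnitAddTorus.mFourierCoeff_eq_integral F k 0, fCoeff,
    setIntegral_congr_set (cube_ae_eq_pi_Ioc d)]
  refine integral_congr_ae (ae_of_all _ fun x => ?_)
  simp only [hF, mFourier_coe_eq_eK, smul_eq_mul, mul_comm (f x), eK, Pi.neg_apply, Int.cast_neg,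
    neg_mul, Finset.sum_neg_distrib, mul_neg]

lemma hasSum_fCoeff_mul_eK (hc : Continuous f) (hf : Periodic1 d f)
    (hs : Summable fun k => ‖fCoeff d f k‖) (x : Fin d → ℝ) :
    HasSum (fun k => fCoeff d f k * eK d k x) (f x) := by
  obtain ⟨F, hF⟩ := hf.exists_torusLift hc
  have hsummable : Summable (UnitAddTorus.mFourierCoeff F) :=
    Summable.of_norm (by simpa only [mFourierCoeff_eq_fCoeff hF] using hs)
  simpa only [mFourierCoeff_eq_fCoeff hF, mFourier_coe_eq_eK, hF, smul_eq_mul] using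
    UnitAddTorus.hasSum_mFourier_series_apply_of_summable hsummable fun i => (x i : UnitAddCircle)

lemma norm_eK (k : Fin d → ℤ) (x : Fin d → ℝ) : ‖eK d k x‖ = 1 := by
  have harg : 2 * (Real.pi : ℂ) * Complex.I * ∑ i, (k i : ℂ) * (x i : ℂ) =
      (2 * Real.pi * ∑ i, (k i : ℝ) * x i : ℝ) * Complex.I := by
    push_cast
    ring
  rw [eK, harg, Complex.norm_exp_ofReal_mul_I]

lemma FdAlpha.norm_apply_le_one {α : ℝ} (hf : f ∈ FdAlpha α d) (x : Fin d → ℝ) : ‖f x‖ ≤ 1 := by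
  obtain ⟨hc, hper, hs, hle, -⟩ := hf
  have hnorm (k : Fin d → ℤ) : ‖fCoeff d f k * eK d k x‖ = ‖fCoeff d f k‖ := by
    rw [norm_mul, norm_eK, mul_one]
  rw [← (hasSum_fCoeff_mul_eK hc hper hs x).tsum_eq]
  refine (norm_tsum_le_tsum_norm ?_).trans ?_ <;> simpa only [hnorm]

end FourierInversion

section Grid

variable {d M : ℕ}

/-- The point `x / M` of the uniform grid with `M ^ d` points on the unit cube. -/
def gridPoint (x : Fin d → Fin M) : Fin d → ℝ := fun i => (x i : ℕ) / M

/-- The closed cell of side `1 / M` whose lower corner is the grid point of `x`. -/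
def gridCell (x : Fin d → Fin M) : Set (Fin d → ℝ) :=
  Set.Icc (gridPoint x) fun i => gridPoint x i + 1 / M

lemma gridPoint_mem_cube (x : Fin d → Fin M) : gridPoint x ∈ cube d := fun i _ =>
  ⟨by unfold gridPoint; positivity,
    div_le_one_of_le₀ (by exact_mod_cast (x i).isLt.le) M.cast_nonneg⟩

lemma exists_div_le_and_le_div_add [NeZero M] {y : ℝ} (hy : y ∈ Set.Icc (0 : ℝ) 1) :
    ∃ j : Fin M, (j : ℕ) / (M : ℝ) ≤ y ∧ y ≤ (j : ℕ) / M + 1 / M := by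
  have hM : (0 : ℝ) < M := by exact_mod_cast NeZero.pos M
  simp only [← add_div, div_le_iff₀ hM, le_div_iff₀ hM]
  rcases hy.2.eq_or_lt with rfl | hlt
  · refine ⟨⟨M - 1, Nat.sub_one_lt_of_lt (NeZero.pos M)⟩, ?_⟩
    simp [Nat.cast_sub (NeZero.one_le (n := M))]
  · have hyM : 0 ≤ y * M := mul_nonneg hy.1 hM.le
    exact ⟨⟨⌊y * M⌋₊, (Nat.floor_lt hyM).mpr (mul_lt_of_lt_one_left hM hlt)⟩, Nat.floor_le hyM,
      (Nat.lt_floor_add_one _).le⟩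

lemma cube_subset_iUnion_gridCell [NeZero M] : cube d ⊆ ⋃ x : Fin d → Fin M, gridCell x := by
  intro y hy
  choose j hj using fun i => exists_div_le_and_le_div_add (M := M) (hy i trivial)
  exact Set.mem_iUnion.mpr ⟨j, fun i => (hj i).1, fun i => (hj i).2⟩

lemma volume_gridCell (x : Fin d → Fin M) :
    volume (gridCell x) = ENNReal.ofReal ((1 / M : ℝ) ^ d) := by
  simp only [gridCell, Real.volume_Icc_pi, add_sub_cancel_left, Finset.prod_const,
    Finset.card_univ, Fintype.card_fin]
  rw [ENNReal.ofReal_pow (by positivity)]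

lemma sqrt_sum_sq_sub_gridPoint_le {x : Fin d → Fin M} {y : Fin d → ℝ} (hy : y ∈ gridCell x) :
    √(∑ i, (y i - gridPoint x i) ^ 2) ≤ √d / M := by
  refine Real.sqrt_le_iff.mpr ⟨by positivity, ?_⟩
  calc ∑ i, (y i - gridPoint x i) ^ 2 ≤ ∑ _i : Fin d, (1 / M : ℝ) ^ 2 := by
        gcongr with i
        · exact sub_nonneg.mpr (hy.1 i)
        · exact sub_le_iff_le_add'.mpr (hy.2 i)
    _ = (√d / M) ^ 2 := by
        rw [Finset.sum_const, Finset.card_univ, Fintype.card_fin, nsmul_eq_mul, div_pow, div_pow,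
          Real.sq_sqrt d.cast_nonneg]
        ring

lemma lintegral_cube_enorm_sq_le [NeZero M] {h : (Fin d → ℝ) → ℂ} {E η : ℝ}
    (hη : ∀ x : Fin d → Fin M, ∀ y ∈ gridCell x, ‖h y - h (gridPoint x)‖ ≤ η)
    (hE : ∑ x : Fin d → Fin M, ‖h (gridPoint x)‖ ^ 2 ≤ E * M ^ d) :
    ∫⁻ y in cube d, ‖h y‖ₑ ^ 2 ≤ ENNReal.ofReal (2 * (E + η ^ 2)) := by
  have hM : (0 : ℝ) < M := by exact_mod_cast NeZero.pos M
  have hcell (x : Fin d → Fin M) : ∫⁻ y in gridCell x, ‖h y‖ₑ ^ 2 ≤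
      ENNReal.ofReal (2 * (‖h (gridPoint x)‖ ^ 2 + η ^ 2) * (1 / M : ℝ) ^ d) := by
    rw [ENNReal.ofReal_mul (by positivity), ← volume_gridCell x, ← setLIntegral_const]
    refine setLIntegral_mono' measurableSet_Icc fun y hy => ?_
    rw [← ofReal_norm, ← ENNReal.ofReal_pow (norm_nonneg _)]
    refine ENNReal.ofReal_le_ofReal ?_
    calc ‖h y‖ ^ 2 ≤ (‖h (gridPoint x)‖ + η) ^ 2 := by
          gcongr
          exact (norm_le_norm_add_norm_sub' _ _).trans (by gcongr; exact hη x y hy)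
      _ ≤ 2 * (‖h (gridPoint x)‖ ^ 2 + η ^ 2) := add_sq_le
  calc ∫⁻ y in cube d, ‖h y‖ₑ ^ 2
      ≤ ∑ x : Fin d → Fin M, ∫⁻ y in gridCell x, ‖h y‖ₑ ^ 2 :=
        (lintegral_mono_set cube_subset_iUnion_gridCell).trans
          ((lintegral_iUnion_le _ _).trans_eq (tsum_fintype _))
    _ ≤ ∑ x : Fin d → Fin M,
          ENNReal.ofReal (2 * (‖h (gridPoint x)‖ ^ 2 + η ^ 2) * (1 / M : ℝ) ^ d) :=
        Finset.sum_le_sum fun x _ => hcell x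
    _ ≤ ENNReal.ofReal (2 * (E + η ^ 2)) := by
        rw [← ENNReal.ofReal_sum_of_nonneg fun x _ => by positivity]
        refine ENNReal.ofReal_le_ofReal ?_
        rw [← Finset.sum_mul, ← Finset.mul_sum, Finset.sum_add_distrib, Finset.sum_const,
          Finset.card_univ, nsmul_eq_mul, Fintype.card_fun, Fintype.card_fin, Nat.cast_pow,
          one_div_pow, Fintype.card_fin, mul_one_div, div_le_iff₀ (pow_pos hM d)]
        linarith

lemma eK_emod_gridPoint [NeZero M] (k : Fin d → ℤ) (x : Fin d → Fin M) :
    eK d (fun i => k i % M) (gridPoint x) = eK d k (gridPoint x) := by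
  have hM : (M : ℂ) ≠ 0 := NeZero.ne _
  have hshift (i : Fin d) : (k i : ℂ) * ((gridPoint x i : ℝ) : ℂ) =
      ((k i % M : ℤ) : ℂ) * ((gridPoint x i : ℝ) : ℂ) + ((k i / M * (x i : ℕ) : ℤ) : ℂ) := by
    have hk : (k i : ℂ) = (k i % M : ℤ) + M * (k i / M : ℤ) := by
      exact_mod_cast (Int.emod_add_mul_ediv (k i) M).symm
    rw [hk, gridPoint]
    push_cast
    field_simp
  refine (Complex.exp_eq_exp_iff_exists_int.mpr ⟨∑ i, k i / M * (x i : ℕ), ?_⟩).symm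
  rw [Finset.sum_congr rfl fun i _ => hshift i, Finset.sum_add_distrib, ← Int.cast_sum]
  ring

lemma exists_sum_norm_sq_gridPoint_le [NeZero M] {ρ : ℝ} (hρ : 0 < ρ) {L n : ℕ}
    (hn : 1024 * L * Real.log (4 * M ^ d) ^ 2 < ρ * n) :
    ∃ x : Fin L × Fin n → (Fin d → Fin M), ∀ (c : (Fin d → ℤ) → ℂ) (h : (Fin d → ℝ) → ℂ),
      (Summable fun k => ‖c k‖) → ∑' k, ‖c k‖ ≤ 1 / 2 →
      (∀ t, HasSum (fun k => c k * eK d k t) (h t)) → (∀ i, h (gridPoint (x i)) = 0) →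
      ∑ y : Fin d → Fin M, ‖h (gridPoint y)‖ ^ 2 ≤ (ρ + (1 / 4) ^ L) * M ^ d := by
  let ψ (k : Fin d → ZMod M) (y : Fin d → Fin M) : ℂ := eK d (fun i => (k i).val) (gridPoint y)
  have hψ (j : (Fin d → ZMod M) × Fin 4) (y : Fin d → Fin M) :
      ‖(Complex.I ^ (j.2 : ℕ) • ψ j.1) y‖ ≤ 1 := by
    rw [Pi.smul_apply, smul_eq_mul, norm_mul, norm_pow, Complex.norm_I, one_pow, norm_eK, mul_one]
  have haliasing (k : Fin d → ℤ) (y : Fin d → Fin M) :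
      ψ (fun i => (k i : ZMod M)) y = eK d k (gridPoint y) := by
    simp only [ψ, ZMod.val_intCast, eK_emod_gridPoint]
  obtain ⟨x, hx⟩ := exists_sum_norm_sq_le_of_apply_eq_zero hψ hρ (L := L) (n := n) <| by
    simpa [mul_comm (4 : ℝ), sq, mul_assoc] using hn
  refine ⟨x, fun c h hc hc_le hsum hzero => ?_⟩
  have hmem := mem_convexHull_of_hasSum (ψ := ψ) (σ := fun k i => (k i : ZMod M))
    (v := fun y => h (gridPoint y)) hc hc_le <| Pi.hasSum.mpr fun y => by
      simpa only [Pi.smul_apply, smul_eq_mul, haliasing] using hsum (gridPoint y)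
  simpa using hx _ hmem hzero

end Grid

section InformationDiameter

section

variable {Ω ι : Type*} [MeasurableSpace Ω] {μ : Measure Ω} {F : Set (Ω → ℂ)} {x : ι → Ω}
  {p ε : ENNReal}

/-- Functions of `F` that agree at all the sample points `x i` are within `L_p`-distance `ε` of
each other. This makes the samples determine a function of `F` up to the error `ε`, so it bounds
the error of an optimal sampling algorithm from above. -/
def InfoDiamLE (F : Set (Ω → ℂ)) (μ : Measure Ω) (p ε : ENNReal) (x : ι → Ω) : Prop :=
  ∀ f ∈ F, ∀ g ∈ F, (∀ i, f (x i) = g (x i)) → eLpNorm (fun t => f t - g t) p μ ≤ ε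

open Classical in
lemma InfoDiamLE.exists_reconstruction (hx : InfoDiamLE F μ p ε x) :
    ∃ φ : (ι → ℂ) → Ω → ℂ, ∀ f ∈ F, eLpNorm (fun t => f t - φ (fun i => f (x i)) t) p μ ≤ ε := by
  refine ⟨fun y => if h : ∃ g ∈ F, ∀ i, g (x i) = y i then h.choose else 0, fun f hf => ?_⟩
  have h : ∃ g ∈ F, ∀ i, g (x i) = f (x i) := ⟨f, hf, fun _ => rfl⟩
  simp only [dif_pos h]
  exact hx f hf _ h.choose_spec.1 fun i => (h.choose_spec.2 i).symm

lemma eLpNorm_le_of_lintegral_enorm_sq_le {h : Ω → ℂ} {p B A ε : ℝ} (hp : 2 ≤ p) (hε : 0 ≤ ε)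
    (hB_nonneg : 0 ≤ B) (hB : ∀ t, ‖h t‖ ≤ B) (hA : ∫⁻ t, ‖h t‖ₑ ^ 2 ∂μ ≤ ENNReal.ofReal A)
    (hle : B ^ (p - 2) * A ≤ ε ^ p) :
    eLpNorm h (ENNReal.ofReal p) μ ≤ ENNReal.ofReal ε := by
  have hp_pos : 0 < p := by linarith
  have hp_sub : 0 ≤ p - 2 := by linarith
  rw [eLpNorm_eq_lintegral_rpow_enorm_toReal (by simpa using hp_pos) ENNReal.ofReal_ne_top,
    ENNReal.toReal_ofReal hp_pos.le, one_div, ENNReal.rpow_inv_le_iff hp_pos,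
    ENNReal.ofReal_rpow_of_nonneg hε hp_pos.le]
  calc ∫⁻ t, ‖h t‖ₑ ^ p ∂μ
      ≤ ∫⁻ t, ENNReal.ofReal (B ^ (p - 2)) * ‖h t‖ₑ ^ 2 ∂μ := by
        gcongr with t
        rw [← sub_add_cancel p 2, ENNReal.rpow_add_of_nonneg _ _ hp_sub zero_le_two,
          ENNReal.rpow_two, add_sub_cancel_right, ← ENNReal.ofReal_rpow_of_nonneg hB_nonneg hp_sub,
          ← ofReal_norm]
        gcongr
        exact hB t
    _ = ENNReal.ofReal (B ^ (p - 2)) * ∫⁻ t, ‖h t‖ₑ ^ 2 ∂μ :=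
        lintegral_const_mul' _ _ ENNReal.ofReal_ne_top
    _ ≤ ENNReal.ofReal (B ^ (p - 2)) * ENNReal.ofReal A := by gcongr
    _ ≤ ENNReal.ofReal (ε ^ p) := by
        rw [← ENNReal.ofReal_mul (Real.rpow_nonneg hB_nonneg _)]
        exact ENNReal.ofReal_le_ofReal hle

end

variable {d : ℕ} {α : ℝ} {f g : (Fin d → ℝ) → ℂ} {ι : Type*} {x : ι → Fin d → ℝ}

instance isProbabilityMeasure_volume_restrict_cube (d : ℕ) :
    IsProbabilityMeasure (volume.restrict (cube d)) :=
  ⟨by rw [Measure.restrict_apply_univ, cube_eq_Icc, Real.volume_Icc_pi]; simp⟩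

lemma InfoDiamLE.of_exponent_le {p q ε : ENNReal} (hpq : p ≤ q)
    (hx : InfoDiamLE (FdAlpha α d) (volume.restrict (cube d)) q ε x) :
    InfoDiamLE (FdAlpha α d) (volume.restrict (cube d)) p ε x := fun f hf g hg h =>
  (eLpNorm_le_eLpNorm_of_exponent_le hpq (hf.1.sub hg.1).aestronglyMeasurable).trans
    (hx f hf g hg h)

namespace FdAlpha

lemma norm_sub_apply_le_two (hf : f ∈ FdAlpha α d) (hg : g ∈ FdAlpha α d) (t : Fin d → ℝ) :
    ‖f t - g t‖ ≤ 2 :=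
  (norm_sub_le_of_le (norm_apply_le_one hf t) (norm_apply_le_one hg t)).trans_eq one_add_one_eq_two

lemma norm_sub_sub_sub_le (hf : f ∈ FdAlpha α d) (hg : g ∈ FdAlpha α d) (s t : Fin d → ℝ) :
    ‖(f s - g s) - (f t - g t)‖ ≤ 2 * √(∑ i, (s i - t i) ^ 2) ^ α := by
  obtain ⟨-, -, -, -, hf⟩ := hf
  obtain ⟨-, -, -, -, hg⟩ := hg
  rw [sub_sub_sub_comm, two_mul]
  exact norm_sub_le_of_le (hf s t) (hg s t)

lemma infoDiamLE_top_two : InfoDiamLE (FdAlpha α d) (volume.restrict (cube d)) ⊤ 2 x :=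
  fun f hf g hg _ => eLpNorm_exponent_top.trans_le <|
    (eLpNormEssSup_le_of_ae_bound (.of_forall (norm_sub_apply_le_two hf hg))).trans_eq (by simp)

lemma exists_quarter_sub_fourier (hf : f ∈ FdAlpha α d) (hg : g ∈ FdAlpha α d) :
    ∃ c : (Fin d → ℤ) → ℂ, (Summable fun k => ‖c k‖) ∧ ∑' k, ‖c k‖ ≤ 1 / 2 ∧
      ∀ t, HasSum (fun k => c k * eK d k t) ((1 / 4) * (f t - g t)) := by
  obtain ⟨hf_cont, hf_per, hf_sum, hf_le, -⟩ := hf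
  obtain ⟨hg_cont, hg_per, hg_sum, hg_le, -⟩ := hg
  have hnorm (k : Fin d → ℤ) : ‖1 / 4 * (fCoeff d f k - fCoeff d g k)‖ ≤
      1 / 4 * (‖fCoeff d f k‖ + ‖fCoeff d g k‖) := by
    rw [norm_mul, show ‖(1 / 4 : ℂ)‖ = 1 / 4 by norm_num]
    gcongr
    exact norm_sub_le _ _
  have hsum := (hf_sum.add hg_sum).mul_left (1 / 4)
  refine ⟨fun k => 1 / 4 * (fCoeff d f k - fCoeff d g k),
    hsum.of_nonneg_of_le (fun _ => norm_nonneg _) hnorm, ?_, fun t => ?_⟩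
  · refine ((hsum.of_nonneg_of_le (fun _ => norm_nonneg _) hnorm).tsum_le_tsum hnorm hsum).trans ?_
    rw [tsum_mul_left, hf_sum.tsum_add hg_sum]
    linarith
  · simpa only [mul_assoc, sub_mul] using ((hasSum_fCoeff_mul_eK hf_cont hf_per hf_sum t).sub
      (hasSum_fCoeff_mul_eK hg_cont hg_per hg_sum t)).mul_left (1 / 4)

lemma exists_infoDiamLE_gridPoint {M : ℕ} [NeZero M] {p ε ρ : ℝ} {L n : ℕ} (hα : 0 < α)
    (hp : 2 ≤ p) (hε : 0 ≤ ε) (hρ : 0 < ρ)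
    (hn : 1024 * L * Real.log (4 * M ^ d) ^ 2 < ρ * n)
    (hle : 2 ^ (p - 2) * (2 * (16 * (ρ + (1 / 4) ^ L) + (2 * (√d / M) ^ α) ^ 2)) ≤ ε ^ p) :
    ∃ x : Fin L × Fin n → (Fin d → Fin M), InfoDiamLE (FdAlpha α d) (volume.restrict (cube d))
      (ENNReal.ofReal p) (ENNReal.ofReal ε) fun i => gridPoint (x i) := by
  obtain ⟨x, hx⟩ := exists_sum_norm_sq_gridPoint_le (d := d) hρ hn
  refine ⟨x, fun f hf g hg hfg => ?_⟩
  obtain ⟨c, hc, hc_le, hsum⟩ := exists_quarter_sub_fourier hf hg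
  have hgrid : ∑ y : Fin d → Fin M, ‖f (gridPoint y) - g (gridPoint y)‖ ^ 2 ≤
      16 * (ρ + (1 / 4) ^ L) * M ^ d := by
    have h := hx c _ hc hc_le hsum fun i => by rw [hfg i, sub_self, mul_zero]
    simp only [norm_mul, mul_pow, ← Finset.mul_sum] at h
    norm_num at h ⊢
    linarith
  refine eLpNorm_le_of_lintegral_enorm_sq_le hp hε zero_le_two (norm_sub_apply_le_two hf hg)
    (lintegral_cube_enorm_sq_le (fun y t ht => ?_) hgrid) hle
  refine (norm_sub_sub_sub_le hf hg t (gridPoint y)).trans ?_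
  gcongr
  exact sqrt_sum_sq_sub_gridPoint_le ht

end FdAlpha

end InformationDiameter

section InformationComplexity

variable {d : ℕ} {α p q ε θ N : ℝ}

/-- The information complexity `n(ε, F_d^α, L_p)` is at most `N`. -/
def InfoComplexityLE (α : ℝ) (d : ℕ) (p ε N : ℝ) : Prop :=
  ∃ n : ℕ, (n : ℝ) ≤ N ∧
    ∃ (x : Fin n → (Fin d → ℝ)) (φ : (Fin n → ℂ) → ((Fin d → ℝ) → ℂ)),
      (∀ i, x i ∈ cube d) ∧
      ∀ f ∈ FdAlpha α d,
        eLpNorm (fun t => f t - φ (fun i => f (x i)) t) (ENNReal.ofReal p)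
          (volume.restrict (cube d)) ≤ ENNReal.ofReal ε

lemma InfoComplexityLE.mono {N' : ℝ} (h : InfoComplexityLE α d p ε N) (hN : N ≤ N') :
    InfoComplexityLE α d p ε N' :=
  let ⟨n, hn, hx⟩ := h
  ⟨n, hn.trans hN, hx⟩

lemma InfoDiamLE.infoComplexityLE {ι : Type*} [Fintype ι] {x : ι → Fin d → ℝ}
    (hx : InfoDiamLE (FdAlpha α d) (volume.restrict (cube d)) (ENNReal.ofReal p)
      (ENNReal.ofReal ε) x) (hx_mem : ∀ i, x i ∈ cube d) :
    InfoComplexityLE α d p ε (Fintype.card ι) := by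
  have hx' : InfoDiamLE (FdAlpha α d) (volume.restrict (cube d)) (ENNReal.ofReal p)
      (ENNReal.ofReal ε) (x ∘ (Fintype.equivFin ι).symm) := fun f hf g hg hfg =>
    hx f hf g hg ((Fintype.equivFin ι).symm.forall_congr_right.mp hfg)
  obtain ⟨φ, hφ⟩ := hx'.exists_reconstruction
  exact ⟨_, le_rfl, _, φ, fun i => hx_mem _, hφ⟩

lemma infoComplexityLE_zero (hε : 2 ≤ ε) : InfoComplexityLE α d p ε 0 := by
  have hdiam : InfoDiamLE (FdAlpha α d) (volume.restrict (cube d)) (ENNReal.ofReal p)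
      (ENNReal.ofReal ε) (Empty.elim : Empty → Fin d → ℝ) := fun f hf g hg h =>
    (FdAlpha.infoDiamLE_top_two.of_exponent_le le_top f hf g hg h).trans
      (by simpa using ENNReal.ofReal_le_ofReal hε)
  simpa using hdiam.infoComplexityLE fun i => i.elim

lemma one_le_log_of_four_le (hθ : 4 ≤ θ) : 1 ≤ Real.log θ := by
  rw [Real.le_log_iff_exp_le (by linarith)]
  linarith [Real.exp_one_lt_d9]

lemma exists_quarter_pow_le_rpow_neg_div (hp : 0 ≤ p) (hθ : 4 ≤ θ) :
    ∃ L : ℕ, (1 / 4 : ℝ) ^ L ≤ θ ^ (-p) / 32 ∧ L ≤ 2 * (p + 3) * Real.log θ := by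
  have hlog := one_le_log_of_four_le hθ
  have hθ_pos : 0 < θ := by linarith
  refine ⟨⌈(p + 3) * Real.log θ⌉₊, ?_, (Nat.ceil_le_two_mul (by nlinarith)).trans_eq (by ring)⟩
  calc (1 / 4 : ℝ) ^ ⌈(p + 3) * Real.log θ⌉₊
      ≤ Real.exp (-1) ^ ⌈(p + 3) * Real.log θ⌉₊ := by
        gcongr
        rw [Real.exp_neg, one_div]
        gcongr
        linarith [Real.exp_one_lt_d9]
    _ ≤ Real.exp (-((p + 3) * Real.log θ)) := by
        rw [← Real.exp_nat_mul, mul_neg_one]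
        gcongr
        exact Nat.le_ceil _
    _ = θ ^ (-p) / θ ^ (3 : ℕ) := by
        rw [← Real.rpow_natCast, ← Real.rpow_sub hθ_pos, Real.rpow_def_of_pos hθ_pos]
        congr 1
        push_cast
        ring
    _ ≤ θ ^ (-p) / 32 := by
        gcongr
        linarith [pow_le_pow_left₀ (by norm_num) hθ 3]

lemma log_four_mul_pow_le {M κ : ℝ} (hd : 1 ≤ d) (hθ : 4 ≤ θ) (hκ : 0 ≤ κ) (hM : 0 < M)
    (hM_le : M ≤ 2 * (d * θ ^ κ)) :
    Real.log (4 * M ^ d) ≤ (κ + 2) * (d * Real.log θ * (1 + Real.log d)) := by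
  have hlog := one_le_log_of_four_le hθ
  have hθ_pos : 0 < θ := by linarith
  have hd1 : (1 : ℝ) ≤ d := by exact_mod_cast hd
  have hlogd : 0 ≤ Real.log d := Real.log_nonneg hd1
  have hlogM : Real.log M ≤ Real.log 2 + (Real.log d + κ * Real.log θ) := by
    refine (Real.log_le_log hM hM_le).trans_eq ?_
    rw [Real.log_mul two_ne_zero (by positivity), Real.log_mul (by positivity) (by positivity),
      Real.log_rpow hθ_pos]
  have hlog4 : Real.log 4 ≤ Real.log θ := Real.log_le_log (by norm_num) hθ
  have hlog2 : Real.log 2 ≤ Real.log θ := Real.log_le_log (by norm_num) (by linarith)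
  calc Real.log (4 * M ^ d) = Real.log 4 + d * Real.log M := by
        rw [Real.log_mul (by norm_num) (by positivity), Real.log_pow]
    _ ≤ d * Real.log θ + d * (Real.log θ + (Real.log θ * Real.log d + κ * Real.log θ)) := by
        gcongr
        · nlinarith
        · refine hlogM.trans ?_
          gcongr
          nlinarith
    _ = d * Real.log θ * (κ + 2 + Real.log d) := by ring
    _ ≤ d * Real.log θ * (κ + 2 + (κ + 2) * Real.log d) := by
        gcongr
        nlinarith
    _ = (κ + 2) * (d * Real.log θ * (1 + Real.log d)) := by ring

lemma exists_sqrt_div_rpow_le_rpow_neg {s : ℝ} (hα : 0 < α) (hs : 0 ≤ s) (hd : 1 ≤ d)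
    (hθ : 4 ≤ θ) :
    ∃ M : ℕ, M ≠ 0 ∧ (√d / M) ^ α ≤ θ ^ (-s) ∧
      Real.log (4 * M ^ d) ≤ (s / α + 2) * (d * Real.log θ * (1 + Real.log d)) := by
  have hθ_pos : 0 < θ := by linarith
  have hd1 : (1 : ℝ) ≤ d := by exact_mod_cast hd
  have hκ : 0 ≤ s / α := by positivity
  have hb : 1 ≤ d * θ ^ (s / α) := one_le_mul_of_one_le_of_one_le hd1
    (Real.one_le_rpow (by linarith) hκ)
  have hM_ge := Nat.le_ceil (d * θ ^ (s / α))
  have hM : (0 : ℝ) < ⌈d * θ ^ (s / α)⌉₊ := by linarith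
  refine ⟨⌈d * θ ^ (s / α)⌉₊, by exact_mod_cast hM.ne', ?_,
    log_four_mul_pow_le hd hθ hκ hM (Nat.ceil_le_two_mul (by linarith))⟩
  calc (√d / ⌈d * θ ^ (s / α)⌉₊) ^ α ≤ (d / (d * θ ^ (s / α))) ^ α := by
        gcongr
        exact Real.sqrt_le_self_iff.mpr (Or.inr hd1)
    _ = θ ^ (-s) := by
        rw [div_mul_cancel_left₀ (by positivity), Real.inv_rpow (by positivity),
          ← Real.rpow_mul hθ_pos.le, div_mul_cancel₀ _ hα.ne', Real.rpow_neg hθ_pos.le]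

lemma two_rpow_mul_le_two_div_rpow {a η : ℝ} (hθ : 4 ≤ θ) (ha : a ≤ θ ^ (-p) / 32)
    (hη_nonneg : 0 ≤ η) (hη : η ≤ θ ^ (-((p + 1) / 2))) :
    2 ^ (p - 2) * (2 * (16 * (θ ^ (-p) / 32 + a) + (2 * η) ^ 2)) ≤ (2 / θ) ^ p := by
  have hθ_pos : 0 < θ := by linarith
  have hη_sq : η ^ 2 ≤ θ ^ (-p) / 4 := calc
    η ^ 2 ≤ (θ ^ (-((p + 1) / 2))) ^ 2 := by gcongr
    _ = θ ^ (-p) / θ := by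
      rw [← Real.rpow_natCast, ← Real.rpow_mul hθ_pos.le, ← Real.rpow_sub_one hθ_pos.ne']
      congr 1
      push_cast
      ring
    _ ≤ θ ^ (-p) / 4 := by gcongr
  calc 2 ^ (p - 2) * (2 * (16 * (θ ^ (-p) / 32 + a) + (2 * η) ^ 2))
      ≤ 2 ^ (p - 2) * (2 ^ 2 * θ ^ (-p)) := by
        refine mul_le_mul_of_nonneg_left ?_ (by positivity)
        linarith
    _ = (2 / θ) ^ p := by
        rw [← mul_assoc, Real.rpow_sub two_pos, Real.rpow_two, div_mul_cancel₀ _ (by norm_num),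
          Real.div_rpow zero_le_two hθ_pos.le, Real.rpow_neg hθ_pos.le, div_eq_mul_inv]

lemma exists_lt_mul_natCast_and_mul_le {L : ℕ} {A B v δ : ℝ} (hA : 1 ≤ A) (hLA : L ≤ A)
    (hB : 1 ≤ B) (hv : 0 ≤ v) (hvB : v ≤ B) (hδ : 0 < δ) (hδ_le : δ ≤ 1) :
    ∃ n : ℕ, 1024 * L * v ^ 2 < δ / 32 * n ∧ L * n ≤ 2 ^ 17 * A ^ 2 * B ^ 2 / δ := by
  have hAB : 1 ≤ A * B ^ 2 / δ := (one_le_div hδ).mpr <|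
    hδ_le.trans (one_le_mul_of_one_le_of_one_le hA (one_le_pow₀ hB))
  refine ⟨⌈2 ^ 16 * (A * B ^ 2 / δ)⌉₊, ?_, ?_⟩
  · calc 1024 * L * v ^ 2 ≤ 1024 * A * B ^ 2 := by gcongr
      _ < δ / 32 * (2 ^ 16 * (A * B ^ 2 / δ)) := by
        field_simp
        norm_num
      _ ≤ δ / 32 * ⌈2 ^ 16 * (A * B ^ 2 / δ)⌉₊ := by
        gcongr
        exact Nat.le_ceil _
  · calc (L : ℝ) * ⌈2 ^ 16 * (A * B ^ 2 / δ)⌉₊ ≤ A * (2 * (2 ^ 16 * (A * B ^ 2 / δ))) := by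
          gcongr
          exact Nat.ceil_le_two_mul (by linarith)
      _ = 2 ^ 17 * A ^ 2 * B ^ 2 / δ := by ring

lemma exists_infoComplexityLE (hα : 0 < α) (hp : 2 ≤ p) :
    ∃ c : ℝ, 0 < c ∧ ∀ (d : ℕ) (θ q ε : ℝ), 1 ≤ d → 4 ≤ θ → q ≤ p → 2 / θ ≤ ε →
      InfoComplexityLE α d q ε (c * d ^ 2 * (1 + Real.log d) ^ 2 * θ ^ p * Real.log θ ^ 4) := by
  let K := (p + 1) / 2 / α + 2
  refine ⟨2 ^ 19 * (p + 3) ^ 2 * K ^ 2, by positivity, fun d θ q ε hd hθ hq hε => ?_⟩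
  have hlog := one_le_log_of_four_le hθ
  have hd1 : (1 : ℝ) ≤ d := by exact_mod_cast hd
  have hB : 1 ≤ K * (d * Real.log θ * (1 + Real.log d)) :=
    one_le_mul_of_one_le_of_one_le (le_add_of_nonneg_of_le (by positivity) one_le_two) <|
      one_le_mul_of_one_le_of_one_le (one_le_mul_of_one_le_of_one_le hd1 hlog)
        (le_add_of_nonneg_right (Real.log_nonneg hd1))
  obtain ⟨L, hL, hL_le⟩ := exists_quarter_pow_le_rpow_neg_div (p := p) (by linarith) hθ
  obtain ⟨M, hM, hM_rpow, hM_log⟩ :=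
    exists_sqrt_div_rpow_le_rpow_neg (s := (p + 1) / 2) hα (by linarith) hd hθ
  have := NeZero.mk hM
  have hlogM : 0 ≤ Real.log (4 * M ^ d) := by
    refine Real.log_nonneg ?_
    exact_mod_cast Nat.one_le_iff_ne_zero.mpr (mul_ne_zero four_ne_zero (pow_ne_zero d hM))
  obtain ⟨n, hn, hn_le⟩ := exists_lt_mul_natCast_and_mul_le (δ := θ ^ (-p)) (by nlinarith) hL_le hB
    hlogM hM_log (by positivity) (Real.rpow_le_one_of_one_le_of_nonpos (by linarith) (by linarith))
  obtain ⟨x, hx⟩ := FdAlpha.exists_infoDiamLE_gridPoint hα hp (by positivity) (by positivity) hn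
    (two_rpow_mul_le_two_div_rpow hθ hL (by positivity) hM_rpow)
  have hdiam : InfoDiamLE (FdAlpha α d) (volume.restrict (cube d)) (ENNReal.ofReal q)
      (ENNReal.ofReal ε) fun i => gridPoint (x i) := fun f hf g hg hfg =>
    (hx.of_exponent_le (ENNReal.ofReal_le_ofReal hq) f hf g hg hfg).trans
      (ENNReal.ofReal_le_ofReal hε)
  refine (hdiam.infoComplexityLE fun i => gridPoint_mem_cube (x i)).mono ?_
  rw [Fintype.card_prod, Fintype.card_fin, Fintype.card_fin, Nat.cast_mul]
  refine hn_le.trans_eq ?_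
  rw [Real.rpow_neg (by linarith), div_inv_eq_mul]
  ring

lemma exists_infoComplexityLE_polynomial (hα : 0 < α) (p : ℝ) :
    ∃ C q r : ℝ, 0 ≤ C ∧ 0 ≤ q ∧ 0 ≤ r ∧ ∀ (d : ℕ) (ε : ℝ), 1 ≤ d → 0 < ε →
      InfoComplexityLE α d p ε (C * (d : ℝ) ^ q * ε ^ (-r)) := by
  obtain ⟨c, hc, hcomplexity⟩ := exists_infoComplexityLE hα (le_max_right p 2)
  have hr : 0 ≤ max p 2 + 4 := by positivity
  refine ⟨c * 8 ^ (max p 2 + 4), 4, max p 2 + 4, by positivity, by norm_num, hr,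
    fun d ε hd hε => ?_⟩
  rcases le_or_gt 2 ε with hε2 | hε2
  · exact (infoComplexityLE_zero hε2).mono (by positivity)
  have hd1 : (1 : ℝ) ≤ d := by exact_mod_cast hd
  have hθ : 4 ≤ 8 / ε := (le_div_iff₀ hε).mpr (by linarith)
  refine (hcomplexity d (8 / ε) p ε hd hθ (le_max_left _ _) ?_).mono ?_
  · rw [div_div_eq_mul_div, div_le_iff₀ (by norm_num)]
    linarith
  calc c * d ^ 2 * (1 + Real.log d) ^ 2 * (8 / ε) ^ max p 2 * Real.log (8 / ε) ^ 4
      ≤ c * d ^ 2 * d ^ 2 * (8 / ε) ^ max p 2 * (8 / ε) ^ 4 := by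
        have hlog := one_le_log_of_four_le hθ
        gcongr
        · linarith [Real.log_le_sub_one_of_pos (zero_lt_one.trans_le hd1)]
        · exact Real.log_le_self (by positivity)
    _ = c * d ^ 4 * (8 / ε) ^ (max p 2 + 4) := by
        rw [Real.rpow_add (by positivity), Real.rpow_ofNat]
        ring
    _ = c * 8 ^ (max p 2 + 4) * (d : ℝ) ^ (4 : ℝ) * ε ^ (-(max p 2 + 4)) := by
        rw [Real.div_rpow (by norm_num) hε.le, Real.rpow_neg hε.le, Real.rpow_ofNat]
        ring

lemma exists_infoComplexityLE_log (hα : 0 < α) (hp : 2 ≤ p) :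
    ∃ c : ℝ, 0 < c ∧ ∀ (d : ℕ) (ε : ℝ), 2 ≤ d → ε ∈ Set.Ioo (0 : ℝ) (1 / 2) →
      InfoComplexityLE α d p ε
        (c * d ^ 2 * Real.log d ^ 2 * ε ^ (-p) * Real.log ε⁻¹ ^ 4) := by
  obtain ⟨c, hc, hcomplexity⟩ := exists_infoComplexityLE hα hp
  refine ⟨c * 3 ^ 2 * 2 ^ p * 2 ^ 4, by positivity, fun d ε hd ⟨hε, hε2⟩ => ?_⟩
  have hθ : 4 ≤ 2 / ε := (le_div_iff₀ hε).mpr (by linarith)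
  refine (hcomplexity d (2 / ε) p ε (by lia) hθ le_rfl (div_div_cancel₀ two_ne_zero).le).mono ?_
  have hlogd : 1 + Real.log d ≤ 3 * Real.log d := by
    have hlog2 : Real.log 2 ≤ Real.log d := Real.log_le_log two_pos (by exact_mod_cast hd)
    linarith [Real.log_two_gt_d9]
  have hlogθ : Real.log (2 / ε) ≤ 2 * Real.log ε⁻¹ := by
    have hlog2 : Real.log 2 ≤ Real.log ε⁻¹ :=
      Real.log_le_log two_pos ((le_inv_comm₀ two_pos hε).mpr (by linarith))
    rw [div_eq_mul_inv, Real.log_mul two_ne_zero (inv_ne_zero hε.ne')]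
    linarith
  calc c * d ^ 2 * (1 + Real.log d) ^ 2 * (2 / ε) ^ p * Real.log (2 / ε) ^ 4
      ≤ c * d ^ 2 * (3 * Real.log d) ^ 2 * (2 / ε) ^ p * (2 * Real.log ε⁻¹) ^ 4 := by
        have hlog := one_le_log_of_four_le hθ
        gcongr
    _ = c * 3 ^ 2 * 2 ^ p * 2 ^ 4 * d ^ 2 * Real.log d ^ 2 * ε ^ (-p) * Real.log ε⁻¹ ^ 4 := by
        rw [Real.div_rpow zero_le_two hε.le, Real.rpow_neg hε.le]
        ring

end InformationComplexity

/-- Corollary `cor:Hoelder`: for `α ∈ (0,1]` and `1 ≤ p < ∞`,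
`L_p`-approximation on `F_d^α` is polynomially tractable; more precisely, for `p ≥ 2`
there is `c > 0` (depending only on `α` and `p`) with
`n(ε, F_d^α, L_p) ≤ c d² log²(d) ε^{-p} log⁴(ε⁻¹)` for all `d ≥ 2`, `ε ∈ (0,1/2)`. -/
theorem statement8 :
    ∀ (α p : ℝ), α ∈ Set.Ioc (0 : ℝ) 1 → 1 ≤ p →
      ((∃ C q r : ℝ, 0 ≤ C ∧ 0 ≤ q ∧ 0 ≤ r ∧
        ∀ (d : ℕ) (ε : ℝ), 1 ≤ d → 0 < ε →
          ∃ n : ℕ, (n : ℝ) ≤ C * (d : ℝ) ^ q * ε ^ (-r) ∧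
            ∃ (x : Fin n → (Fin d → ℝ)) (φ : (Fin n → ℂ) → ((Fin d → ℝ) → ℂ)),
              (∀ i, x i ∈ cube d) ∧
              ∀ f ∈ FdAlpha α d,
                eLpNorm (fun t => f t - φ (fun i => f (x i)) t) (ENNReal.ofReal p)
                    (volume.restrict (cube d)) ≤ ENNReal.ofReal ε) ∧
      (2 ≤ p →
        ∃ c : ℝ, 0 < c ∧
          ∀ (d : ℕ) (ε : ℝ), 2 ≤ d → ε ∈ Set.Ioo (0 : ℝ) (1/2) →
            ∃ n : ℕ,
              (n : ℝ) ≤ c * d ^ 2 * Real.log d ^ 2 * ε ^ (-p) * Real.log ε⁻¹ ^ 4 ∧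
              ∃ (x : Fin n → (Fin d → ℝ)) (φ : (Fin n → ℂ) → ((Fin d → ℝ) → ℂ)),
                (∀ i, x i ∈ cube d) ∧
                ∀ f ∈ FdAlpha α d,
                  eLpNorm (fun t => f t - φ (fun i => f (x i)) t) (ENNReal.ofReal p)
                      (volume.restrict (cube d)) ≤ ENNReal.ofReal ε)) := by
  intro α p hα _
  refine ⟨exists_infoComplexityLE_polynomial hα.1 p, fun hp => ?_⟩
  exact exists_infoComplexityLE_log hα.1 hp
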